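/- Let a₂(φ) = (1/2) log φ (the normal and inverse Gaussian proper dispersion models). Then for every φ > 0 one has a₂''(φ) = −1/(2φ²) and a₂'''(φ) = 1/φ³. Consequently, for any integer n ≥ 1, taking α₂ = n a₂''(φ) = −n/(2φ²) < 0 and α₂′ = α₃ = n a₂'''(φ) = n/φ³ > 0 in the precision-test setup with ε = φ − φ₀: for every x > 0, Π₂(x) = Π₃(x) < Π₁(x) < Π₄(x) when φ > φ₀, and Π₂(x) = Π₃(x) > Π₁(x) > Π₄(x) when 0 < φ < φ₀. -/

import Mathlib

/-!
For `α₂' = α₃` the Wald and score coefficients coincide, and with `G_m = G_{m,λ}(x)` and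
`λ = -α₂ ε²` the differences of local powers are

`Π₁ - Π₃ = 2 (Π₄ - Π₁) = ε α₃ ((G₃ - G₅) / (-2 α₂) + ε² (G₅ - G₇) / 6)`.

So for `α₂ < 0 < α₃` everything reduces to `G_{m+2} < G_m`. The central densities satisfy
`f_{m+2}' = (f_m - f_{m+2}) / 2`, hence the central distribution functions satisfy
`F_m - F_{m+2} = 2 f_{m+2} > 0`, and the strict inequality passes to their Poisson mixtures.
-/

/-- The chi-square density with `m` degrees of freedom:
`f_m(x) = x^(m/2-1) e^(-x/2) / (2^(m/2) Γ(m/2))` for `x > 0`, and `0` otherwise. -/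
noncomputable def chisqPDF (m : ℕ) (x : ℝ) : ℝ :=
  if 0 < x then
    x ^ ((m : ℝ) / 2 - 1) * Real.exp (-x / 2) /
      (2 ^ ((m : ℝ) / 2) * Real.Gamma ((m : ℝ) / 2))
  else 0

/-- The noncentral chi-square density with `m` degrees of freedom and
noncentrality parameter `lam`:
`g_{m,λ}(x) = Σ_{j=0}^∞ [e^{-λ/2} (λ/2)^j / j!] f_{m+2j}(x)`. -/
noncomputable def ncChisqPDF (m : ℕ) (lam x : ℝ) : ℝ :=
  ∑' j : ℕ, Real.exp (-lam / 2) * (lam / 2) ^ j / (Nat.factorial j : ℝ) *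
    chisqPDF (m + 2 * j) x

/-- The noncentral chi-square distribution function
`G_{m,λ}(x) = ∫_0^x g_{m,λ}(u) du`. -/
noncomputable def ncChisqCDF (m : ℕ) (lam x : ℝ) : ℝ :=
  ∫ u in (0 : ℝ)..x, ncChisqPDF m lam u

/-- The order-`n^{-1/2}` local power `1 - G_{1,λ}(x) - Σ_{k=0}^3 b_k G_{1+2k,λ}(x)`
of a test whose expansion coefficients are `b₀ = -(b₁+b₂+b₃), b₁, b₂, b₃`. -/
noncomputable def localPower (b1 b2 b3 lam x : ℝ) : ℝ :=
  1 - ncChisqCDF 1 lam x -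
    (-(b1 + b2 + b3) * ncChisqCDF 1 lam x + b1 * ncChisqCDF 3 lam x +
      b2 * ncChisqCDF 5 lam x + b3 * ncChisqCDF 7 lam x)

/-- Local power `Π₁` of the likelihood ratio test of `H₀ : φ = φ₀` in a
dispersion model, with `λ = -α₂ ε²`. -/
noncomputable def PiLR (α₂ α₂' α₃ ε φ : ℝ) (p : ℕ) (x : ℝ) : ℝ :=
  localPower ((α₂' - α₃) * ε ^ 3 / 2 + p * ε / (2 * φ))
    ((2 * α₃ - 3 * α₂') * ε ^ 3 / 6) 0 (-α₂ * ε ^ 2) x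

/-- Local power `Π₂` of the Wald test of `H₀ : φ = φ₀` in a dispersion model. -/
noncomputable def PiWald (α₂ α₂' α₃ ε φ : ℝ) (p : ℕ) (x : ℝ) : ℝ :=
  localPower ((α₂' - α₃) * ε ^ 3 / 2 - α₃ * ε / (2 * α₂) + p * ε / (2 * φ))
    (-((α₂' - α₃) * ε ^ 3) / 2 + α₃ * ε / (2 * α₂)) (-(α₃ * ε ^ 3) / 6)
    (-α₂ * ε ^ 2) x

/-- Local power `Π₃` of the score test of `H₀ : φ = φ₀` in a dispersion model. -/
noncomputable def PiScore (α₂ α₂' α₃ ε φ : ℝ) (p : ℕ) (x : ℝ) : ℝ :=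
  localPower ((α₂' - α₃) * ε ^ 3 / 2 + (2 * α₃ - 3 * α₂') * ε / (2 * α₂) + p * ε / (2 * φ))
    (-((2 * α₃ - 3 * α₂') * ε) / (2 * α₂)) ((2 * α₃ - 3 * α₂') * ε ^ 3 / 6)
    (-α₂ * ε ^ 2) x

/-- Local power `Π₄` of the gradient test of `H₀ : φ = φ₀` in a dispersion model. -/
noncomputable def PiGrad (α₂ α₂' α₃ ε φ : ℝ) (p : ℕ) (x : ℝ) : ℝ :=
  localPower ((α₂' - α₃) * ε ^ 3 / 2 + α₃ * ε / (4 * α₂) + p * ε / (2 * φ))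
    (-((2 * α₂' - α₃) * ε ^ 3) / 4 - α₃ * ε / (4 * α₂)) (α₃ * ε ^ 3 / 12)
    (-α₂ * ε ^ 2) x

section LogDerivatives

lemma deriv_deriv_const_mul_log (c : ℝ) :
    deriv (deriv fun t : ℝ => c * Real.log t) = fun t => -c / t ^ 2 := by
  have h : (deriv fun t : ℝ => c * Real.log t) = fun t => c * t⁻¹ := by
    funext t
    rw [deriv_const_mul_field, Real.deriv_log]
  funext t
  rw [h, deriv_const_mul_field, deriv_inv]
  ring

lemma deriv_deriv_deriv_const_mul_log (c : ℝ) :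
    deriv (deriv (deriv fun t : ℝ => c * Real.log t)) = fun t => 2 * c / t ^ 3 := by
  have h (t : ℝ) : -c / t ^ 2 = -c * t ^ (-2 : ℤ) := by
    rw [zpow_neg, div_eq_mul_inv]
    norm_cast
  funext t
  simp only [deriv_deriv_const_mul_log, h]
  rw [deriv_const_mul_field, deriv_zpow, show (-2 - 1 : ℤ) = -(3 : ℕ) by norm_num,
    zpow_neg, zpow_natCast]
  push_cast
  ring

end LogDerivatives

section Mixture

open MeasureTheory

lemma hasSum_smul_integral_of_summable {α ι E : Type*} [MeasurableSpace α] [Countable ι]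
    [NormedAddCommGroup E] [NormedSpace ℝ E] {μ : Measure α} {w : ι → ℝ} {f : ι → α → E} {C : ℝ}
    (hw : Summable w) (hf : ∀ i, Integrable (f i) μ) (hC : ∀ i, ∫ a, ‖f i a‖ ∂μ ≤ C) :
    HasSum (fun i => w i • ∫ a, f i a ∂μ) (∫ a, ∑' i, w i • f i a ∂μ) := by
  have hnorm : Summable fun i => ∫ a, ‖w i • f i a‖ ∂μ := by
    simp only [norm_smul, integral_const_mul]
    exact .of_nonneg_of_le (fun i => by positivity)
      (fun i => mul_le_mul_of_nonneg_left (hC i) (norm_nonneg _)) (hw.norm.mul_right C)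
  simpa only [Pi.smul_apply, integral_smul] using
    hasSum_integral_of_summable_integral_norm (fun i => (hf i).smul (w i)) hnorm

end Mixture

section Central

open MeasureTheory ProbabilityTheory

variable {m : ℕ} {x : ℝ}

lemma chisqPDF_of_pos (hx : 0 < x) :
    chisqPDF m x = x ^ ((m : ℝ) / 2 - 1) * Real.exp (-x / 2) /
      (2 ^ ((m : ℝ) / 2) * Real.Gamma ((m : ℝ) / 2)) :=
  if_pos hx

lemma chisqPDF_of_nonpos (hx : x ≤ 0) : chisqPDF m x = 0 :=
  if_neg hx.not_gt

-- At `x = 0` the two sides differ for `m = 2`, where `gammaPDFReal` evaluates `0 ^ 0 = 1`.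
lemma chisqPDF_eq_gammaPDFReal (hx : x ≠ 0) :
    chisqPDF m x = gammaPDFReal ((m : ℝ) / 2) (1 / 2) x := by
  rcases hx.lt_or_gt with hneg | hpos
  · rw [chisqPDF_of_nonpos hneg.le, gammaPDFReal, if_neg hneg.not_ge]
  · rw [chisqPDF_of_pos hpos, gammaPDFReal, if_pos hpos.le,
      Real.div_rpow zero_le_one zero_le_two, Real.one_rpow, neg_div, one_div_mul_eq_div]
    ring

lemma chisqPDF_ae_eq_gammaPDFReal (m : ℕ) :
    chisqPDF m =ᵐ[volume] gammaPDFReal ((m : ℝ) / 2) (1 / 2) := by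
  filter_upwards [Measure.ae_ne volume 0] with x hx using chisqPDF_eq_gammaPDFReal hx

lemma chisqPDF_pos (hm : m ≠ 0) (hx : 0 < x) : 0 < chisqPDF m x := by
  rw [chisqPDF_eq_gammaPDFReal hx.ne']
  exact gammaPDFReal_pos (by positivity) one_half_pos hx

lemma chisqPDF_nonneg (m : ℕ) (x : ℝ) : 0 ≤ chisqPDF m x := by
  have := Real.Gamma_nonneg_of_nonneg (show 0 ≤ (m : ℝ) / 2 by positivity)
  rw [chisqPDF]
  split_ifs <;> positivity

lemma chisqPDF_add_two (hm : m ≠ 0) (x : ℝ) : chisqPDF (m + 2) x = x / m * chisqPDF m x := by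
  rcases le_or_gt x 0 with hx | hx
  · rw [chisqPDF_of_nonpos hx, chisqPDF_of_nonpos hx, mul_zero]
  have hm' : (m : ℝ) / 2 ≠ 0 := by positivity
  have hΓ : Real.Gamma ((m : ℝ) / 2) ≠ 0 := (Real.Gamma_pos_of_pos (by positivity)).ne'
  have hdeg : ((m + 2 : ℕ) : ℝ) / 2 = (m : ℝ) / 2 + 1 := by push_cast; ring
  rw [chisqPDF_of_pos hx, chisqPDF_of_pos hx, hdeg, Real.Gamma_add_one hm',
    Real.rpow_add_one two_ne_zero, add_sub_right_comm, Real.rpow_add_one hx.ne']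
  field_simp

lemma hasDerivAt_chisqPDF (m : ℕ) (hx : 0 < x) :
    HasDerivAt (chisqPDF m) ((((m : ℝ) / 2 - 1) / x - 1 / 2) * chisqPDF m x) x := by
  have hpow := Real.hasDerivAt_rpow_const (p := (m : ℝ) / 2 - 1) (Or.inl hx.ne')
  have hexp : HasDerivAt (fun u : ℝ => Real.exp (-u / 2)) (Real.exp (-x / 2) * (-1 / 2)) x :=
    ((hasDerivAt_id x).neg.div_const 2).exp
  have hformula := (hpow.mul hexp).div_const (2 ^ ((m : ℝ) / 2) * Real.Gamma ((m : ℝ) / 2))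
  refine (hformula.congr_of_eventuallyEq ?_).congr_deriv ?_
  · filter_upwards [lt_mem_nhds hx] with u hu using chisqPDF_of_pos hu
  · rw [chisqPDF_of_pos hx, Real.rpow_sub_one hx.ne']
    ring

lemma hasDerivAt_chisqPDF_add_two (hm : m ≠ 0) (hx : 0 < x) :
    HasDerivAt (chisqPDF (m + 2)) ((chisqPDF m x - chisqPDF (m + 2) x) / 2) x := by
  refine (hasDerivAt_chisqPDF (m + 2) hx).congr_deriv ?_
  rw [chisqPDF_add_two hm]
  push_cast
  field_simp
  ring

lemma continuous_chisqPDF (hm : 2 < m) : Continuous (chisqPDF m) := by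
  have hexponent : 0 < (m : ℝ) / 2 - 1 := by
    have : (2 : ℝ) < m := by exact_mod_cast hm
    linarith
  have hmax : chisqPDF m = fun u => max u 0 ^ ((m : ℝ) / 2 - 1) * Real.exp (-u / 2) /
      (2 ^ ((m : ℝ) / 2) * Real.Gamma ((m : ℝ) / 2)) := by
    funext u
    rcases le_or_gt u 0 with hu | hu
    · rw [chisqPDF_of_nonpos hu, max_eq_right hu, Real.zero_rpow hexponent.ne', zero_mul, zero_div]
    · rw [chisqPDF_of_pos hu, max_eq_left hu.le]
  have := Real.continuous_rpow_const hexponent.le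
  rw [hmax]
  fun_prop

lemma lintegral_chisqPDF (hm : m ≠ 0) : ∫⁻ u, ENNReal.ofReal (chisqPDF m u) = 1 := by
  calc ∫⁻ u, ENNReal.ofReal (chisqPDF m u)
      = ∫⁻ u, gammaPDF ((m : ℝ) / 2) (1 / 2) u :=
        lintegral_congr_ae ((chisqPDF_ae_eq_gammaPDFReal m).fun_comp ENNReal.ofReal)
    _ = 1 := lintegral_gammaPDF_eq_one (by positivity) one_half_pos

lemma aestronglyMeasurable_chisqPDF (m : ℕ) : AEStronglyMeasurable (chisqPDF m) :=
  (stronglyMeasurable_gammaPDFReal _ _).aestronglyMeasurable.congr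
    (chisqPDF_ae_eq_gammaPDFReal m).symm

lemma integrable_chisqPDF (hm : m ≠ 0) : Integrable (chisqPDF m) := by
  rw [← lintegral_ofReal_ne_top_iff_integrable (aestronglyMeasurable_chisqPDF m)
    (.of_forall (chisqPDF_nonneg m)), lintegral_chisqPDF hm]
  exact ENNReal.one_ne_top

lemma integral_chisqPDF (hm : m ≠ 0) : ∫ u, chisqPDF m u = 1 := by
  rw [integral_eq_lintegral_of_nonneg_ae (.of_forall (chisqPDF_nonneg m))
    (aestronglyMeasurable_chisqPDF m), lintegral_chisqPDF hm, ENNReal.toReal_one]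

/-- The distribution function `F_m` of the (central) chi-square law with `m` degrees of freedom,
on `[0, ∞)`. -/
noncomputable def chisqCDF (m : ℕ) (x : ℝ) : ℝ :=
  ∫ u in (0 : ℝ)..x, chisqPDF m u

lemma chisqCDF_sub_chisqCDF_add_two (hm : m ≠ 0) (hx : 0 ≤ x) :
    chisqCDF m x - chisqCDF (m + 2) x = 2 * chisqPDF (m + 2) x := by
  have hint : IntervalIntegrable (chisqPDF m) volume 0 x :=
    (integrable_chisqPDF hm).intervalIntegrable
  have hint' : IntervalIntegrable (chisqPDF (m + 2)) volume 0 x :=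
    (integrable_chisqPDF (by omega)).intervalIntegrable
  have hFTC : ∫ u in (0 : ℝ)..x, (chisqPDF m u - chisqPDF (m + 2) u) / 2 =
      chisqPDF (m + 2) x - chisqPDF (m + 2) 0 :=
    intervalIntegral.integral_eq_sub_of_hasDerivAt_of_le hx
      (continuous_chisqPDF (by omega)).continuousOn
      (fun u hu => hasDerivAt_chisqPDF_add_two hm hu.1) ((hint.sub hint').div_const 2)
  rw [intervalIntegral.integral_div, intervalIntegral.integral_sub hint hint',
    chisqPDF_of_nonpos le_rfl, sub_zero] at hFTC
  rw [chisqCDF, chisqCDF]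
  linarith

lemma chisqCDF_add_two_lt (hm : m ≠ 0) (hx : 0 < x) : chisqCDF (m + 2) x < chisqCDF m x := by
  have hpos : 0 < chisqPDF (m + 2) x := chisqPDF_pos (by omega) hx
  linarith [chisqCDF_sub_chisqCDF_add_two hm hx.le]

end Central

section Noncentral

open MeasureTheory

variable {m : ℕ} {lam x : ℝ}

/-- The probability of `j` under the Poisson law with mean `lam / 2`: the weight of the central
law with `m + 2 * j` degrees of freedom in the noncentral one. -/
noncomputable def poissonWeight (lam : ℝ) (j : ℕ) : ℝ :=
  Real.exp (-lam / 2) * (lam / 2) ^ j / (Nat.factorial j : ℝ)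

lemma poissonWeight_nonneg (hlam : 0 ≤ lam) (j : ℕ) : 0 ≤ poissonWeight lam j := by
  rw [poissonWeight]
  positivity

lemma poissonWeight_zero_pos (lam : ℝ) : 0 < poissonWeight lam 0 := by
  rw [poissonWeight, pow_zero]
  positivity

lemma summable_poissonWeight (lam : ℝ) : Summable (poissonWeight lam) := by
  refine ((Real.summable_pow_div_factorial (lam / 2)).mul_left (Real.exp (-lam / 2))).congr
    fun j => ?_
  rw [poissonWeight, mul_div_assoc]

lemma hasSum_ncChisqCDF (hm : m ≠ 0) (lam : ℝ) (hx : 0 ≤ x) :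
    HasSum (fun j => poissonWeight lam j * chisqCDF (m + 2 * j) x) (ncChisqCDF m lam x) := by
  have hint (j : ℕ) : Integrable (chisqPDF (m + 2 * j)) := integrable_chisqPDF (by omega)
  have hbound (j : ℕ) : ∫ u in Set.Ioc 0 x, ‖chisqPDF (m + 2 * j) u‖ ≤ 1 := by
    simp only [Real.norm_of_nonneg (chisqPDF_nonneg _ _)]
    exact (setIntegral_le_integral (hint j) (.of_forall (chisqPDF_nonneg _))).trans_eq
      (integral_chisqPDF (by omega))
  simpa only [chisqCDF, ncChisqCDF, ncChisqPDF, poissonWeight, smul_eq_mul,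
    intervalIntegral.integral_of_le hx] using
    hasSum_smul_integral_of_summable (summable_poissonWeight lam)
      (fun j => (hint j).integrableOn) hbound

lemma ncChisqCDF_add_two_lt (hm : m ≠ 0) (hlam : 0 ≤ lam) (hx : 0 < x) :
    ncChisqCDF (m + 2) lam x < ncChisqCDF m lam x := by
  have hlt (j : ℕ) : chisqCDF (m + 2 + 2 * j) x < chisqCDF (m + 2 * j) x := by
    rw [add_right_comm]
    exact chisqCDF_add_two_lt (by omega) hx
  -- Strictness comes from `j = 0`, the only term of positive weight when `lam = 0`.
  exact hasSum_lt (i := 0)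
    (fun j => mul_le_mul_of_nonneg_left (hlt j).le (poissonWeight_nonneg hlam j))
    (mul_lt_mul_of_pos_left (hlt 0) (poissonWeight_zero_pos lam))
    (hasSum_ncChisqCDF (by omega) lam hx.le) (hasSum_ncChisqCDF hm lam hx.le)

end Noncentral

section LocalPower

/-- The rate `(Π₁ - Π₃) / ε` at which the local power of the likelihood ratio test exceeds that of
the score test when `α₂' = α₃`. -/
noncomputable def powerGap (α₂ α₃ ε x : ℝ) : ℝ :=
  α₃ * ((ncChisqCDF 3 (-α₂ * ε ^ 2) x - ncChisqCDF 5 (-α₂ * ε ^ 2) x) / (-2 * α₂) +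
    ε ^ 2 * (ncChisqCDF 5 (-α₂ * ε ^ 2) x - ncChisqCDF 7 (-α₂ * ε ^ 2) x) / 6)

lemma powerGap_pos {α₂ α₃ x : ℝ} (hα₂ : α₂ < 0) (hα₃ : 0 < α₃) (ε : ℝ) (hx : 0 < x) :
    0 < powerGap α₂ α₃ ε x := by
  have hlam : 0 ≤ -α₂ * ε ^ 2 := mul_nonneg (neg_pos.2 hα₂).le (sq_nonneg ε)
  have h35 := sub_pos.2 (ncChisqCDF_add_two_lt three_ne_zero hlam hx)
  have h57 := sub_pos.2 (ncChisqCDF_add_two_lt (m := 5) (by norm_num) hlam hx)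
  have hα : 0 < -2 * α₂ := by linarith
  rw [powerGap]
  positivity

variable (α₂ α₃ ε φ : ℝ) (p : ℕ) (x : ℝ)

lemma PiWald_eq_PiScore : PiWald α₂ α₃ α₃ ε φ p x = PiScore α₂ α₃ α₃ ε φ p x := by
  rw [PiWald, PiScore]
  ring_nf

lemma PiLR_sub_PiScore :
    PiLR α₂ α₃ α₃ ε φ p x - PiScore α₂ α₃ α₃ ε φ p x = ε * powerGap α₂ α₃ ε x := by
  simp only [PiLR, PiScore, localPower, powerGap]
  ring

lemma PiGrad_sub_PiLR :
    PiGrad α₂ α₃ α₃ ε φ p x - PiLR α₂ α₃ α₃ ε φ p x = ε * powerGap α₂ α₃ ε x / 2 := by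
  simp only [PiGrad, PiLR, localPower, powerGap]
  ring

end LocalPower

theorem normal_invGaussian_precision_ordering_general {α₂ α₃ x : ℝ} (hα₂ : α₂ < 0) (hα₃ : 0 < α₃)
    (ε φ : ℝ) (p : ℕ) (hx : 0 < x) :
    (0 < ε →
      PiWald α₂ α₃ α₃ ε φ p x = PiScore α₂ α₃ α₃ ε φ p x ∧
      PiScore α₂ α₃ α₃ ε φ p x < PiLR α₂ α₃ α₃ ε φ p x ∧
      PiLR α₂ α₃ α₃ ε φ p x < PiGrad α₂ α₃ α₃ ε φ p x) ∧
    (ε < 0 →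
      PiWald α₂ α₃ α₃ ε φ p x = PiScore α₂ α₃ α₃ ε φ p x ∧
      PiLR α₂ α₃ α₃ ε φ p x < PiScore α₂ α₃ α₃ ε φ p x ∧
      PiGrad α₂ α₃ α₃ ε φ p x < PiLR α₂ α₃ α₃ ε φ p x) := by
  have hWald := PiWald_eq_PiScore α₂ α₃ ε φ p x
  have hLR := PiLR_sub_PiScore α₂ α₃ ε φ p x
  have hGrad := PiGrad_sub_PiLR α₂ α₃ ε φ p x
  have hgap := powerGap_pos hα₂ hα₃ ε hx
  constructor <;> intro hε
  · have := mul_pos hε hgap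
    exact ⟨hWald, by linarith, by linarith⟩
  · have := mul_neg_of_neg_of_pos hε hgap
    exact ⟨hWald, by linarith, by linarith⟩

/-- **Normal / inverse Gaussian precision tests.**
For `a₂(φ) = (1/2) log φ` one has `a₂''(φ) = -1/(2φ²)` and `a₂'''(φ) = 1/φ³`
for every `φ > 0`. Consequently, taking `α₂ = n a₂''(φ) = -n/(2φ²) < 0` and
`α₂′ = α₃ = n a₂'''(φ) = n/φ³ > 0` in the precision-test setup with
`ε = φ - φ₀`, for every `x > 0` the local powers satisfy
`Π₂ = Π₃ < Π₁ < Π₄` when `φ > φ₀`, and `Π₂ = Π₃ > Π₁ > Π₄` when `0 < φ < φ₀`. -/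
theorem normal_invGaussian_precision_ordering (φ : ℝ) (hφ : 0 < φ) :
    deriv (deriv (fun t : ℝ => (1 / 2) * Real.log t)) φ = -1 / (2 * φ ^ 2) ∧
    deriv (deriv (deriv (fun t : ℝ => (1 / 2) * Real.log t))) φ = 1 / φ ^ 3 ∧
    ∀ n : ℕ, 1 ≤ n → ∀ p : ℕ, 1 ≤ p → ∀ φ₀ : ℝ, 0 < φ₀ → ∀ x : ℝ, 0 < x →
      (φ₀ < φ →
        PiWald (-(n : ℝ) / (2 * φ ^ 2)) ((n : ℝ) / φ ^ 3) ((n : ℝ) / φ ^ 3)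
            (φ - φ₀) φ p x =
          PiScore (-(n : ℝ) / (2 * φ ^ 2)) ((n : ℝ) / φ ^ 3) ((n : ℝ) / φ ^ 3)
            (φ - φ₀) φ p x ∧
        PiScore (-(n : ℝ) / (2 * φ ^ 2)) ((n : ℝ) / φ ^ 3) ((n : ℝ) / φ ^ 3)
            (φ - φ₀) φ p x <
          PiLR (-(n : ℝ) / (2 * φ ^ 2)) ((n : ℝ) / φ ^ 3) ((n : ℝ) / φ ^ 3)
            (φ - φ₀) φ p x ∧
        PiLR (-(n : ℝ) / (2 * φ ^ 2)) ((n : ℝ) / φ ^ 3) ((n : ℝ) / φ ^ 3)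
            (φ - φ₀) φ p x <
          PiGrad (-(n : ℝ) / (2 * φ ^ 2)) ((n : ℝ) / φ ^ 3) ((n : ℝ) / φ ^ 3)
            (φ - φ₀) φ p x) ∧
      (φ < φ₀ →
        PiWald (-(n : ℝ) / (2 * φ ^ 2)) ((n : ℝ) / φ ^ 3) ((n : ℝ) / φ ^ 3)
            (φ - φ₀) φ p x =
          PiScore (-(n : ℝ) / (2 * φ ^ 2)) ((n : ℝ) / φ ^ 3) ((n : ℝ) / φ ^ 3)
            (φ - φ₀) φ p x ∧
        PiLR (-(n : ℝ) / (2 * φ ^ 2)) ((n : ℝ) / φ ^ 3) ((n : ℝ) / φ ^ 3)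
            (φ - φ₀) φ p x <
          PiScore (-(n : ℝ) / (2 * φ ^ 2)) ((n : ℝ) / φ ^ 3) ((n : ℝ) / φ ^ 3)
            (φ - φ₀) φ p x ∧
        PiGrad (-(n : ℝ) / (2 * φ ^ 2)) ((n : ℝ) / φ ^ 3) ((n : ℝ) / φ ^ 3)
            (φ - φ₀) φ p x <
          PiLR (-(n : ℝ) / (2 * φ ^ 2)) ((n : ℝ) / φ ^ 3) ((n : ℝ) / φ ^ 3)
            (φ - φ₀) φ p x) := by
  refine ⟨?_, ?_, fun n hn p _ φ₀ _ x hx => ?_⟩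
  · rw [deriv_deriv_const_mul_log]
    ring
  · rw [deriv_deriv_deriv_const_mul_log]
    ring
  have hn' : (0 : ℝ) < n := by exact_mod_cast hn
  have hα₂ : -(n : ℝ) / (2 * φ ^ 2) < 0 :=
    div_neg_of_neg_of_pos (neg_neg_of_pos hn') (by positivity)
  have hα₃ : 0 < (n : ℝ) / φ ^ 3 := by positivity
  simpa only [sub_pos, sub_neg] using
    normal_invGaussian_precision_ordering_general hα₂ hα₃ (φ - φ₀) φ p hx
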